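/- Let N ≥ 2 be an integer, p > 1, and let φ be a nonnegative measurable function on [0,1) with ∫ φ dμ = f and ∫ φ^p dμ = F, where f, F > 0 and f^p ≤ F. Then for every u ≥ f, ∫_{{M_N φ > u}} (M_N φ)^p dμ ≥ μ({M_N φ > u})·u^p + ((N^p − 1)/(N^p − N))·max(F − u^{p−1} f, 0). -/

import Mathlib

open MeasureTheory Set Filter

/-- The `N`-adic interval `[k/N^m, (k+1)/N^m)` at level `m`. -/
def adicItv (N m k : ℕ) : Set ℝ :=
  Set.Ico ((k : ℝ) / (N : ℝ) ^ m) (((k : ℝ) + 1) / (N : ℝ) ^ m)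

/-- The average `(1/μ(I)) ∫_I |φ| dμ` of `φ` over the `N`-adic interval at level `m`, index `k`
(its measure is `N^{-m}`). -/
noncomputable def adicAvg (N : ℕ) (φ : ℝ → ℝ) (m k : ℕ) : ℝ :=
  (N : ℝ) ^ m * ∫ y in adicItv N m k, |φ y|

/-- The `N`-adic maximal operator on `[0,1)`:
`M_N φ(x) = sup { (1/μ(I)) ∫_I |φ| dμ : x ∈ I, I an N-adic interval }`. -/
noncomputable def adicMax (N : ℕ) (φ : ℝ → ℝ) (x : ℝ) : ℝ :=
  sSup {r : ℝ | ∃ m k : ℕ, k < N ^ m ∧ x ∈ adicItv N m k ∧ r = adicAvg N φ m k}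

/-
Let `g_n` be the conditional expectations of `g` along a filtration, with `g_{n+1} ≤ b * g_n`, and
`M_n` the maximum of `u` and `g_0, …, g_{n-1}`. The energy `∫ (M_n ^ p - c * M_n ^ (p - 1) * g)`
does not change if `g` is replaced by `g_n`, as `M_n` is determined at time `n`; passing from `M_n`
to `M_{n+1}` then only matters where `M_n < g_n ≤ b * M_n`. There the convexity of `t ^ p` on
`[M_n, b * M_n]` makes the energy increase for `c = (b ^ p - 1) / (b ^ p - b)`, whereas Young's
inequality makes it decrease for `c = p / (p - 1)`. The latter yields Doob's `L ^ p` bound, which by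
dominated convergence lets `n` tend to infinity in the former. Since `g_n → g` almost everywhere,
the limit `M` satisfies `g ≤ M`, so that `M ^ (p - 1) * g ≥ g ^ p`.
-/

open scoped ENNReal Topology

section Pointwise

variable {p b c m x y : ℝ}

theorem rpow_sub_one_mul_self (hp : p ≠ 0) (hx : 0 ≤ x) : x ^ (p - 1) * x = x ^ p := by
  rw [← Real.rpow_add_one' hx (by rwa [sub_add_cancel]), sub_add_cancel]

theorem mul_rpow_sub_one_mul_le (hp : 1 < p) (hx : 0 ≤ x) (hy : 0 ≤ y) :
    p * (x ^ (p - 1) * y) ≤ (p - 1) * x ^ p + y ^ p := by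
  have hp1 : p - 1 ≠ 0 := (sub_pos.2 hp).ne'
  have young := Real.young_inequality_of_nonneg (Real.rpow_nonneg hx (p - 1)) hy
    (Real.HolderConjugate.conjExponent hp).symm
  rw [← Real.rpow_mul hx, Real.conjExponent, mul_div_cancel₀ _ hp1] at young
  calc p * (x ^ (p - 1) * y) ≤ p * (x ^ p / (p / (p - 1)) + y ^ p / p) := by gcongr
    _ = (p - 1) * x ^ p + y ^ p := by field_simp

/-- The sharp constant `(b ^ p - 1) / (b ^ p - b)` of the lower maximal inequality for
nonnegative martingales that grow by a factor of at most `b` at each step. -/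
noncomputable def regularDoobConst (b p : ℝ) : ℝ :=
  (b ^ p - 1) / (b ^ p - b)

theorem regularDoobConst_nonneg (hb : 1 < b) (hp : 1 < p) : 0 ≤ regularDoobConst b p :=
  div_nonneg (sub_nonneg.2 (Real.one_le_rpow hb.le (by linarith)))
    (sub_nonneg.2 (Real.self_le_rpow_of_one_le hb.le hp.le))

/-- The integrand `m ^ p - c * m ^ (p - 1) * y` of the energy of a running maximum `m`, where `y`
stands for the function itself or for its current conditional expectation. -/
noncomputable def doobDensity (p c m y : ℝ) : ℝ :=
  m ^ p - c * (m ^ (p - 1) * y)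

theorem doobDensity_le_doobDensity_max (hb : 1 < b) (hp : 1 < p) (hm : 0 ≤ m) (hy : y ≤ b * m) :
    doobDensity p (regularDoobConst b p) m y ≤
      doobDensity p (regularDoobConst b p) (max m y) y := by
  rcases le_or_gt y m with hym | hmy
  · rw [max_eq_left hym]
  have hm : 0 < m := hm.lt_of_ne (by rintro rfl; linarith)
  have hy0 : 0 < y := hm.trans hmy
  have hp0 : p ≠ 0 := by linarith
  have hD : 0 < b ^ p - b := sub_pos.2 (Real.self_lt_rpow_of_one_lt hb hp)
  have chord : (b * m - m) * y ^ p ≤ (b * m - y) * m ^ p + (y - m) * (b * m) ^ p := by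
    rcases hy.eq_or_lt with rfl | hy
    · simp
    · exact (convexOn_rpow hp.le).secant_mono_aux1 hm.le (by positivity : 0 ≤ b * m) hmy hy
  rw [Real.mul_rpow (by linarith) hm.le] at chord
  have gap : m * (b ^ p - b) *
        (doobDensity p (regularDoobConst b p) y y - doobDensity p (regularDoobConst b p) m y) =
      (b * m - y) * m ^ p + (y - m) * (b ^ p * m ^ p) - (b * m - m) * y ^ p := by
    simp only [doobDensity, regularDoobConst, rpow_sub_one_mul_self hp0 hy0.le,
      ← rpow_sub_one_mul_self hp0 hm.le]
    field_simp
    ring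
  rw [max_eq_right hmy.le, ← sub_nonneg, ← mul_nonneg_iff_of_pos_left (mul_pos hm hD), gap]
  exact sub_nonneg.2 chord

theorem doobDensity_max_le_doobDensity (hp : 1 < p) (hm : 0 ≤ m) :
    doobDensity p p.conjExponent (max m y) y ≤ doobDensity p p.conjExponent m y := by
  rcases le_total y m with hym | hmy
  · rw [max_eq_left hym]
  have hp0 : p ≠ 0 := by linarith
  have hp1 : 0 < p - 1 := sub_pos.2 hp
  have young := mul_rpow_sub_one_mul_le hp hm (hm.trans hmy)
  have gap : (p - 1) *
        (doobDensity p p.conjExponent m y - doobDensity p p.conjExponent y y) =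
      (p - 1) * m ^ p + y ^ p - p * (m ^ (p - 1) * y) := by
    simp only [doobDensity, Real.conjExponent, rpow_sub_one_mul_self hp0 (hm.trans hmy)]
    field_simp
    ring
  rw [max_eq_right hmy, ← sub_nonneg, ← mul_nonneg_iff_of_pos_left hp1, gap]
  exact sub_nonneg.2 young

theorem rpow_le_mul_doobDensity_add (hp : 1 < p) (hm : 0 ≤ m) (hy : 0 ≤ y) :
    m ^ p ≤ p * doobDensity p p.conjExponent m y + (p.conjExponent * y) ^ p := by
  have hq : 0 ≤ p.conjExponent := div_nonneg (by linarith) (by linarith)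
  have young := mul_rpow_sub_one_mul_le hp hm (mul_nonneg hq hy)
  rw [doobDensity]
  linarith

theorem doobDensity_le_of_le (hp : 1 < p) (hc : 0 ≤ c) (hy : 0 ≤ y) (hym : y ≤ m) :
    doobDensity p c m y ≤ m ^ p - c * y ^ p := by
  have hmul : y ^ p ≤ m ^ (p - 1) * y := by
    rw [← rpow_sub_one_mul_self (by linarith) hy]
    gcongr
  rw [doobDensity]
  gcongr

theorem abs_doobDensity_le (hp : 1 < p) (hm : 0 ≤ m) (hmx : m ≤ x) (hy : 0 ≤ y) (hyx : y ≤ x) :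
    |doobDensity p c m y| ≤ (1 + |c|) * x ^ p := by
  have hx : 0 ≤ x := hm.trans hmx
  have hpow : |m ^ p| ≤ x ^ p := by
    rw [abs_of_nonneg (by positivity)]
    gcongr
  have hmul : |m ^ (p - 1) * y| ≤ x ^ p := by
    rw [abs_of_nonneg (by positivity), ← rpow_sub_one_mul_self (by linarith) hx]
    gcongr
  calc |doobDensity p c m y| ≤ |m ^ p| + |c * (m ^ (p - 1) * y)| := abs_sub _ _
    _ = |m ^ p| + |c| * |m ^ (p - 1) * y| := by rw [abs_mul]
    _ ≤ x ^ p + |c| * x ^ p := by gcongr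
    _ = (1 + |c|) * x ^ p := by ring

end Pointwise

section Martingale

variable {Ω : Type*} {m₀ : MeasurableSpace Ω} {μ : Measure Ω} {ℱ : Filtration ℕ m₀}
  {f g : Ω → ℝ} {b c p u : ℝ} {n : ℕ}

theorem integral_mul_condExp {m : MeasurableSpace Ω} (hm : m ≤ m₀) [SigmaFinite (μ.trim hm)]
    (hf : StronglyMeasurable[m] f) (hfg : Integrable (fun ω ↦ f ω * g ω) μ)
    (hg : Integrable g μ) : ∫ ω, f ω * (μ[g | m]) ω ∂μ = ∫ ω, f ω * g ω ∂μ := by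
  rw [← integral_condExp hm (f := fun ω ↦ f ω * g ω)]
  exact integral_congr_ae (condExp_mul_of_stronglyMeasurable_left hf hfg hg).symm

theorem integrable_of_tendsto_of_integral_le {F : ℕ → Ω → ℝ} {K : ℝ}
    (hF : ∀ n, Integrable (F n) μ) (hF0 : ∀ n, 0 ≤ᵐ[μ] F n) (hFK : ∀ n, ∫ ω, F n ω ∂μ ≤ K)
    (hFf : ∀ᵐ ω ∂μ, Tendsto (fun n ↦ F n ω) atTop (𝓝 (f ω))) : Integrable f μ := by
  refine ⟨aestronglyMeasurable_of_tendsto_ae atTop (fun n ↦ (hF n).1) hFf, ?_⟩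
  have hlim : ∀ᵐ ω ∂μ, ‖f ω‖ₑ = liminf (fun n ↦ ‖F n ω‖ₑ) atTop := by
    filter_upwards [hFf] with ω hω using hω.enorm.liminf_eq.symm
  have hbound (n : ℕ) : ∫⁻ ω, ‖F n ω‖ₑ ∂μ ≤ ENNReal.ofReal K := by
    rw [← ofReal_integral_norm_eq_lintegral_enorm (hF n)]
    refine ENNReal.ofReal_le_ofReal (le_trans (integral_congr_ae ?_).le (hFK n))
    filter_upwards [hF0 n] with ω hω using Real.norm_of_nonneg hω
  calc ∫⁻ ω, ‖f ω‖ₑ ∂μ = ∫⁻ ω, liminf (fun n ↦ ‖F n ω‖ₑ) atTop ∂μ := lintegral_congr_ae hlim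
    _ ≤ liminf (fun n ↦ ∫⁻ ω, ‖F n ω‖ₑ ∂μ) atTop := lintegral_liminf_le' fun n ↦ (hF n).1.enorm
    _ ≤ ENNReal.ofReal K := liminf_le_of_le (by isBoundedDefault) fun a ha ↦ by
      obtain ⟨n, hn⟩ := ha.exists
      exact hn.trans (hbound n)
    _ < ∞ := ENNReal.ofReal_lt_top

theorem integrable_rpow_iff_memLp (hp : 0 < p) (hf : AEStronglyMeasurable f μ)
    (hf0 : 0 ≤ᵐ[μ] f) : Integrable (fun ω ↦ f ω ^ p) μ ↔ MemLp f (ENNReal.ofReal p) μ := by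
  rw [← integrable_norm_rpow_iff hf (by simpa) ENNReal.ofReal_ne_top, ENNReal.toReal_ofReal hp.le]
  refine integrable_congr ?_
  filter_upwards [hf0] with ω hω
  rw [Real.norm_of_nonneg hω]

theorem integrable_rpow_of_memLp (hp : 0 < p) (hf0 : 0 ≤ᵐ[μ] f)
    (hf : MemLp f (ENNReal.ofReal p) μ) : Integrable (fun ω ↦ f ω ^ p) μ :=
  (integrable_rpow_iff_memLp hp hf.1 hf0).2 hf

theorem integrable_rpow_sub_one_mul (hp : 1 < p) (hf0 : 0 ≤ᵐ[μ] f) (hg0 : 0 ≤ᵐ[μ] g)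
    (hf : MemLp f (ENNReal.ofReal p) μ) (hg : MemLp g (ENNReal.ofReal p) μ) :
    Integrable (fun ω ↦ f ω ^ (p - 1) * g ω) μ := by
  have hp0 : 0 < p := by linarith
  refine (((integrable_rpow_of_memLp hp0 hf0 hf).const_mul (p - 1)).add
    (integrable_rpow_of_memLp hp0 hg0 hg)).mono'
    ((hf.1.aemeasurable.pow_const _).mul hg.1.aemeasurable).aestronglyMeasurable ?_
  filter_upwards [hf0, hg0] with ω hfω hgω
  have hmul : 0 ≤ f ω ^ (p - 1) * g ω := mul_nonneg (Real.rpow_nonneg hfω _) hgω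
  rw [Real.norm_of_nonneg hmul]
  exact (le_mul_of_one_le_left hmul hp.le).trans (mul_rpow_sub_one_mul_le hp hfω hgω)

theorem integrable_doobDensity (hp : 1 < p) (hf0 : 0 ≤ᵐ[μ] f) (hg0 : 0 ≤ᵐ[μ] g)
    (hf : MemLp f (ENNReal.ofReal p) μ) (hg : MemLp g (ENNReal.ofReal p) μ) :
    Integrable (fun ω ↦ doobDensity p c (f ω) (g ω)) μ :=
  (integrable_rpow_of_memLp (by linarith) hf0 hf).sub
    ((integrable_rpow_sub_one_mul hp hf0 hg0 hf hg).const_mul c)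

theorem integral_max_rpow (hf : Measurable f) (hint : Integrable (fun ω ↦ max u (f ω) ^ p) μ) :
    ∫ ω, max u (f ω) ^ p ∂μ =
      ∫ ω in {ω | u < f ω}, f ω ^ p ∂μ + μ.real {ω | u < f ω}ᶜ * u ^ p := by
  have hs : MeasurableSet {ω | u < f ω} := measurableSet_lt measurable_const hf
  have hin : ∫ ω in {ω | u < f ω}, max u (f ω) ^ p ∂μ = ∫ ω in {ω | u < f ω}, f ω ^ p ∂μ :=
    setIntegral_congr_fun hs fun ω (hω : u < f ω) ↦ by simp only [max_eq_right hω.le]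
  have hout : ∫ ω in {ω | u < f ω}ᶜ, max u (f ω) ^ p ∂μ = ∫ _ in {ω | u < f ω}ᶜ, u ^ p ∂μ :=
    setIntegral_congr_fun hs.compl fun ω (hω : ¬ u < f ω) ↦ by
      simp only [max_eq_left (not_lt.1 hω)]
  rw [← integral_add_compl hs hint, hin, hout, setIntegral_const, smul_eq_mul]

/-- The maximal function of the martingale `μ[g | ℱ n]`; with the supremum of `ℝ`, it takes the
junk value `0` where the martingale is unbounded above. -/
noncomputable def doobMax (μ : Measure Ω) (ℱ : Filtration ℕ m₀) (g : Ω → ℝ) (ω : Ω) : ℝ :=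
  ⨆ n, (μ[g | ℱ n]) ω

theorem measurable_doobMax : Measurable (doobMax μ ℱ g) :=
  Measurable.iSup fun n ↦ (stronglyMeasurable_condExp.mono (ℱ.le n)).measurable

/-- The running maximum, floored at `u`, of the martingale `μ[g | ℱ n]`. The indices are shifted so
that `runningMax μ ℱ g u n` involves only the first `n` conditional expectations and the sequence
starts from the constant `u`. -/
noncomputable def runningMax (μ : Measure Ω) (ℱ : Filtration ℕ m₀) (g : Ω → ℝ) (u : ℝ) :
    ℕ → Ω → ℝ
  | 0, _ => u
  | n + 1, ω => max (runningMax μ ℱ g u n ω) ((μ[g | ℱ n]) ω)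

theorem monotone_runningMax (ω : Ω) : Monotone fun n ↦ runningMax μ ℱ g u n ω :=
  monotone_nat_of_le_succ fun _ ↦ le_max_left _ _

theorem le_runningMax (n : ℕ) (ω : Ω) : u ≤ runningMax μ ℱ g u n ω :=
  monotone_runningMax ω n.zero_le

theorem condExp_le_runningMax_succ (n : ℕ) (ω : Ω) :
    (μ[g | ℱ n]) ω ≤ runningMax μ ℱ g u (n + 1) ω :=
  le_max_right _ _

theorem condExp_le_mul_runningMax (hb : 0 ≤ b) (h0 : μ[g | ℱ 0] ≤ᵐ[μ] fun _ ↦ b * u)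
    (hreg : ∀ n, μ[g | ℱ (n + 1)] ≤ᵐ[μ] fun ω ↦ b * (μ[g | ℱ n]) ω) (n : ℕ) :
    μ[g | ℱ n] ≤ᵐ[μ] fun ω ↦ b * runningMax μ ℱ g u n ω := by
  cases n with
  | zero => exact h0
  | succ n =>
    filter_upwards [hreg n] with ω hω
    exact hω.trans (mul_le_mul_of_nonneg_left (condExp_le_runningMax_succ n ω) hb)

theorem measurable_runningMax {k : ℕ} (hn : n ≤ k + 1) :
    Measurable[ℱ k] (runningMax μ ℱ g u n) := by
  induction n with
  | zero => exact measurable_const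
  | succ n ih =>
    exact (ih (by omega)).max (stronglyMeasurable_condExp.mono (ℱ.mono (by omega))).measurable

theorem memLp_runningMax [IsFiniteMeasure μ] {q : ℝ≥0∞} (hq : 1 ≤ q) (hg : MemLp g q μ) :
    MemLp (runningMax μ ℱ g u n) q μ := by
  induction n with
  | zero => exact memLp_const u
  | succ n ih => exact ih.sup (hg.condExp hq)

theorem tendsto_runningMax {ω : Ω} (hω : BddAbove (range fun n ↦ (μ[g | ℱ n]) ω)) :
    Tendsto (fun n ↦ runningMax μ ℱ g u n ω) atTop (𝓝 (max u (doobMax μ ℱ g ω))) := by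
  have hle (n : ℕ) : runningMax μ ℱ g u n ω ≤ max u (doobMax μ ℱ g ω) := by
    induction n with
    | zero => exact le_max_left _ _
    | succ n ih => exact max_le ih ((le_ciSup hω n).trans (le_max_right _ _))
  have hbdd : BddAbove (range fun n ↦ runningMax μ ℱ g u n ω) :=
    ⟨_, forall_mem_range.2 hle⟩
  convert tendsto_atTop_ciSup (monotone_runningMax ω) hbdd using 2
  exact le_antisymm
    (max_le (le_ciSup hbdd 0) (ciSup_le fun n ↦
      (condExp_le_runningMax_succ n ω).trans (le_ciSup hbdd (n + 1))))
    (ciSup_le hle)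

variable [IsFiniteMeasure μ]

theorem ae_tendsto_condExp (hg : Integrable g μ) (hgm : AEStronglyMeasurable[⨆ n, ℱ n] g μ) :
    ∀ᵐ ω ∂μ, Tendsto (fun n ↦ (μ[g | ℱ n]) ω) atTop (𝓝 (g ω)) := by
  have hlim : μ[g | ⨆ n, ℱ n] =ᵐ[μ] g :=
    condExp_of_aestronglyMeasurable' (iSup_le ℱ.le) hgm hg
  filter_upwards [tendsto_ae_condExp (ℱ := ℱ) g, hlim] with ω hω hgω using hgω ▸ hω

theorem ae_le_doobMax (hg : Integrable g μ) (hgm : AEStronglyMeasurable[⨆ n, ℱ n] g μ) :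
    g ≤ᵐ[μ] doobMax μ ℱ g := by
  filter_upwards [ae_tendsto_condExp hg hgm] with ω hω
  exact le_of_tendsto' hω (le_ciSup hω.bddAbove_range)

theorem ae_tendsto_runningMax :
    ∀ᵐ ω ∂μ, Tendsto (fun n ↦ runningMax μ ℱ g u n ω) atTop (𝓝 (max u (doobMax μ ℱ g ω))) := by
  filter_upwards [tendsto_ae_condExp (ℱ := ℱ) g] with ω hω
  exact tendsto_runningMax hω.bddAbove_range

/-- The energy of the martingale `μ[g | ℱ n]` at time `n`, relative to the coupling constant `c`. It
increases in time for `c = regularDoobConst b p` and decreases for `c = p.conjExponent`. -/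
noncomputable def doobEnergy (μ : Measure Ω) (ℱ : Filtration ℕ m₀) (g : Ω → ℝ) (u p c : ℝ)
    (n : ℕ) : ℝ :=
  ∫ ω, doobDensity p c (runningMax μ ℱ g u n ω) (g ω) ∂μ

theorem doobEnergy_zero (hg : Integrable g μ) :
    doobEnergy μ ℱ g u p c 0 = μ.real univ * u ^ p - c * (u ^ (p - 1) * ∫ ω, g ω ∂μ) := by
  simp only [doobEnergy, doobDensity, runningMax]
  rw [integral_sub (integrable_const _) ((hg.const_mul _).const_mul _), integral_const,
    integral_const_mul, integral_const_mul, smul_eq_mul]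

section

variable (hp : 1 < p) (hu : 0 ≤ u) (hg0 : 0 ≤ᵐ[μ] g) (hg : MemLp g (ENNReal.ofReal p) μ)

include hp hu hg0 hg

theorem integrable_doobDensity_runningMax :
    Integrable (fun ω ↦ doobDensity p c (runningMax μ ℱ g u n ω) (g ω)) μ :=
  integrable_doobDensity hp (ae_of_all _ fun ω ↦ hu.trans (le_runningMax n ω)) hg0
    (memLp_runningMax (by simpa using hp.le) hg) hg

theorem integrable_doobDensity_runningMax_condExp (k : ℕ) :
    Integrable (fun ω ↦ doobDensity p c (runningMax μ ℱ g u n ω) ((μ[g | ℱ k]) ω)) μ :=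
  have hp1 : 1 ≤ ENNReal.ofReal p := by simpa using hp.le
  integrable_doobDensity hp (ae_of_all _ fun ω ↦ hu.trans (le_runningMax n ω))
    (condExp_nonneg hg0) (memLp_runningMax hp1 hg) (hg.condExp hp1)

theorem doobEnergy_eq_integral_condExp {k : ℕ} (hn : n ≤ k + 1) :
    doobEnergy μ ℱ g u p c n =
      ∫ ω, doobDensity p c (runningMax μ ℱ g u n ω) ((μ[g | ℱ k]) ω) ∂μ := by
  have hp1 : 1 ≤ ENNReal.ofReal p := by simpa using hp.le
  have hM0 : 0 ≤ᵐ[μ] runningMax μ ℱ g u n := ae_of_all _ fun ω ↦ hu.trans (le_runningMax n ω)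
  have hM := memLp_runningMax (ℱ := ℱ) (u := u) (n := n) hp1 hg
  have hMp := integrable_rpow_of_memLp (by linarith) hM0 hM
  have hMg := integrable_rpow_sub_one_mul hp hM0 hg0 hM hg
  have hMk := integrable_rpow_sub_one_mul hp hM0 (condExp_nonneg hg0 (m := ℱ k)) hM
    (hg.condExp hp1)
  have hmeas : StronglyMeasurable[ℱ k] fun ω ↦ runningMax μ ℱ g u n ω ^ (p - 1) :=
    ((measurable_runningMax hn).pow_const _).stronglyMeasurable
  simp only [doobEnergy, doobDensity]
  rw [integral_sub hMp (hMg.const_mul c), integral_sub hMp (hMk.const_mul c),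
    integral_const_mul, integral_const_mul,
    integral_mul_condExp (ℱ.le k) hmeas hMg (hg.integrable hp1)]

theorem monotone_doobEnergy (hb : 1 < b) (h0 : μ[g | ℱ 0] ≤ᵐ[μ] fun _ ↦ b * u)
    (hreg : ∀ n, μ[g | ℱ (n + 1)] ≤ᵐ[μ] fun ω ↦ b * (μ[g | ℱ n]) ω) :
    Monotone (doobEnergy μ ℱ g u p (regularDoobConst b p)) := by
  refine monotone_nat_of_le_succ fun n ↦ ?_
  rw [doobEnergy_eq_integral_condExp hp hu hg0 hg n.le_succ,
    doobEnergy_eq_integral_condExp hp hu hg0 hg le_rfl]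
  refine integral_mono_ae (integrable_doobDensity_runningMax_condExp hp hu hg0 hg n)
    (integrable_doobDensity_runningMax_condExp hp hu hg0 hg n) ?_
  filter_upwards [condExp_le_mul_runningMax (by linarith) h0 hreg n] with ω hω
  exact doobDensity_le_doobDensity_max hb hp (hu.trans (le_runningMax n ω)) hω

theorem antitone_doobEnergy : Antitone (doobEnergy μ ℱ g u p p.conjExponent) := by
  refine antitone_nat_of_succ_le fun n ↦ ?_
  rw [doobEnergy_eq_integral_condExp hp hu hg0 hg n.le_succ,
    doobEnergy_eq_integral_condExp hp hu hg0 hg le_rfl]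
  exact integral_mono (integrable_doobDensity_runningMax_condExp hp hu hg0 hg n)
    (integrable_doobDensity_runningMax_condExp hp hu hg0 hg n)
    fun ω ↦ doobDensity_max_le_doobDensity hp (hu.trans (le_runningMax n ω))

theorem integral_runningMax_rpow_le (n : ℕ) :
    ∫ ω, runningMax μ ℱ g u n ω ^ p ∂μ ≤
      p * (μ.real univ * u ^ p) + ∫ ω, (p.conjExponent * g ω) ^ p ∂μ := by
  have hp1 : 1 ≤ ENNReal.ofReal p := by simpa using hp.le
  have hq : 0 ≤ p.conjExponent := div_nonneg (by linarith) (by linarith)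
  have hM0 (ω : Ω) : 0 ≤ runningMax μ ℱ g u n ω := hu.trans (le_runningMax n ω)
  have hqg0 : 0 ≤ᵐ[μ] fun ω ↦ p.conjExponent * g ω := by
    filter_upwards [hg0] with ω hω using mul_nonneg hq hω
  have hMp := integrable_rpow_of_memLp (by linarith) (ae_of_all _ hM0)
    (memLp_runningMax (ℱ := ℱ) hp1 hg)
  have hdens := (integrable_doobDensity_runningMax (ℱ := ℱ) (c := p.conjExponent) (n := n)
    hp hu hg0 hg).const_mul p
  have hqgp := integrable_rpow_of_memLp (by linarith) hqg0 (hg.const_mul _)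
  have henergy : doobEnergy μ ℱ g u p p.conjExponent n ≤ μ.real univ * u ^ p := by
    refine (antitone_doobEnergy hp hu hg0 hg n.zero_le).trans ?_
    rw [doobEnergy_zero (hg.integrable hp1)]
    exact sub_le_self _ (mul_nonneg hq
      (mul_nonneg (Real.rpow_nonneg hu _) (integral_nonneg_of_ae hg0)))
  calc ∫ ω, runningMax μ ℱ g u n ω ^ p ∂μ
      ≤ ∫ ω, (p * doobDensity p p.conjExponent (runningMax μ ℱ g u n ω) (g ω) +
          (p.conjExponent * g ω) ^ p) ∂μ := by
        refine integral_mono_ae hMp (hdens.add hqgp) ?_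
        filter_upwards [hg0] with ω hω using rpow_le_mul_doobDensity_add hp (hM0 ω) hω
    _ = p * doobEnergy μ ℱ g u p p.conjExponent n + ∫ ω, (p.conjExponent * g ω) ^ p ∂μ := by
        rw [integral_add hdens hqgp, integral_const_mul, doobEnergy]
    _ ≤ p * (μ.real univ * u ^ p) + ∫ ω, (p.conjExponent * g ω) ^ p ∂μ := by gcongr

theorem memLp_max_doobMax :
    MemLp (fun ω ↦ max u (doobMax μ ℱ g ω)) (ENNReal.ofReal p) μ := by
  have hp1 : 1 ≤ ENNReal.ofReal p := by simpa using hp.le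
  have hM0 (n : ℕ) (ω : Ω) : 0 ≤ runningMax μ ℱ g u n ω := hu.trans (le_runningMax n ω)
  rw [← integrable_rpow_iff_memLp (by linarith)
    (measurable_const.max measurable_doobMax).aestronglyMeasurable
    (ae_of_all _ fun ω ↦ hu.trans (le_max_left _ _))]
  refine integrable_of_tendsto_of_integral_le
    (fun n ↦ integrable_rpow_of_memLp (by linarith) (ae_of_all _ (hM0 n))
      (memLp_runningMax (ℱ := ℱ) hp1 hg))
    (fun n ↦ ae_of_all _ fun ω ↦ Real.rpow_nonneg (hM0 n ω) p)
    (integral_runningMax_rpow_le hp hu hg0 hg) ?_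
  filter_upwards [ae_tendsto_runningMax] with ω hω
  exact hω.rpow_const (.inr (by linarith))

theorem integrable_max_doobMax_rpow :
    Integrable (fun ω ↦ max u (doobMax μ ℱ g ω) ^ p) μ :=
  integrable_rpow_of_memLp (by linarith) (ae_of_all _ fun _ ↦ hu.trans (le_max_left _ _))
    (memLp_max_doobMax hp hu hg0 hg)

theorem tendsto_doobEnergy (hgm : AEStronglyMeasurable[⨆ n, ℱ n] g μ) :
    Tendsto (doobEnergy μ ℱ g u p c) atTop
      (𝓝 (∫ ω, doobDensity p c (max u (doobMax μ ℱ g ω)) (g ω) ∂μ)) := by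
  have hp1 : 1 ≤ ENNReal.ofReal p := by simpa using hp.le
  refine tendsto_integral_of_dominated_convergence
    (fun ω ↦ (1 + |c|) * max u (doobMax μ ℱ g ω) ^ p)
    (fun n ↦ (integrable_doobDensity_runningMax hp hu hg0 hg).1)
    ((integrable_max_doobMax_rpow hp hu hg0 hg).const_mul _) (fun n ↦ ?_) ?_
  · filter_upwards [ae_tendsto_runningMax (ℱ := ℱ) (g := g) (u := u), hg0,
      ae_le_doobMax (hg.integrable hp1) hgm] with ω hlim hg0ω hgω
    exact abs_doobDensity_le hp (hu.trans (le_runningMax n ω))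
      ((monotone_runningMax ω).ge_of_tendsto hlim n) hg0ω (hgω.trans (le_max_right _ _))
  · filter_upwards [ae_tendsto_runningMax (ℱ := ℱ) (g := g) (u := u)] with ω hlim
    exact (hlim.rpow_const (.inr (by linarith))).sub
      (((hlim.rpow_const (.inr (by linarith))).mul_const _).const_mul c)

theorem add_le_integral_max_doobMax_rpow (hb : 1 < b)
    (hgm : AEStronglyMeasurable[⨆ n, ℱ n] g μ) (h0 : μ[g | ℱ 0] ≤ᵐ[μ] fun _ ↦ b * u)
    (hreg : ∀ n, μ[g | ℱ (n + 1)] ≤ᵐ[μ] fun ω ↦ b * (μ[g | ℱ n]) ω) :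
    μ.real univ * u ^ p +
        regularDoobConst b p * (∫ ω, g ω ^ p ∂μ - u ^ (p - 1) * ∫ ω, g ω ∂μ) ≤
      ∫ ω, max u (doobMax μ ℱ g ω) ^ p ∂μ := by
  have hp1 : 1 ≤ ENNReal.ofReal p := by simpa using hp.le
  have hW := integrable_max_doobMax_rpow (ℱ := ℱ) hp hu hg0 hg
  have hgp := (integrable_rpow_of_memLp (by linarith) hg0 hg).const_mul (regularDoobConst b p)
  have hdens := integrable_doobDensity (c := regularDoobConst b p) hp
    (ae_of_all _ fun _ ↦ hu.trans (le_max_left _ _)) hg0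
    (memLp_max_doobMax (ℱ := ℱ) hp hu hg0 hg) hg
  have hstart := (monotone_doobEnergy hp hu hg0 hg hb h0 hreg).ge_of_tendsto
    (tendsto_doobEnergy hp hu hg0 hg hgm) 0
  have hend : ∫ ω, doobDensity p (regularDoobConst b p) (max u (doobMax μ ℱ g ω)) (g ω) ∂μ ≤
      ∫ ω, (max u (doobMax μ ℱ g ω) ^ p - regularDoobConst b p * g ω ^ p) ∂μ := by
    refine integral_mono_ae hdens (hW.sub hgp) ?_
    filter_upwards [hg0, ae_le_doobMax (hg.integrable hp1) hgm] with ω hg0ω hgω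
    exact doobDensity_le_of_le hp (regularDoobConst_nonneg hb hp) hg0ω
      (hgω.trans (le_max_right _ _))
  rw [doobEnergy_zero (hg.integrable hp1)] at hstart
  rw [integral_sub hW hgp, integral_const_mul] at hend
  linarith

end

theorem setIntegral_doobMax_rpow_ge (hp : 1 < p) (hu : 0 ≤ u) (hb : 1 < b) (hg0 : 0 ≤ᵐ[μ] g)
    (hg : MemLp g (ENNReal.ofReal p) μ) (hgm : AEStronglyMeasurable[⨆ n, ℱ n] g μ)
    (h0 : μ[g | ℱ 0] ≤ᵐ[μ] fun _ ↦ b * u)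
    (hreg : ∀ n, μ[g | ℱ (n + 1)] ≤ᵐ[μ] fun ω ↦ b * (μ[g | ℱ n]) ω) :
    ∫ ω in {ω | u < doobMax μ ℱ g ω}, doobMax μ ℱ g ω ^ p ∂μ ≥
      μ.real {ω | u < doobMax μ ℱ g ω} * u ^ p +
        regularDoobConst b p * max (∫ ω, g ω ^ p ∂μ - u ^ (p - 1) * ∫ ω, g ω ∂μ) 0 := by
  have hW := integrable_max_doobMax_rpow (ℱ := ℱ) hp hu hg0 hg
  have hsplit := integral_max_rpow measurable_doobMax hW
  have huniv := measureReal_add_measureReal_compl (μ := μ)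
    (measurableSet_lt (measurable_const (a := u)) (measurable_doobMax (μ := μ) (ℱ := ℱ) (g := g)))
  have hbound : μ.real univ * u ^ p +
        regularDoobConst b p * max (∫ ω, g ω ^ p ∂μ - u ^ (p - 1) * ∫ ω, g ω ∂μ) 0 ≤
      ∫ ω, max u (doobMax μ ℱ g ω) ^ p ∂μ := by
    rcases le_total (∫ ω, g ω ^ p ∂μ - u ^ (p - 1) * ∫ ω, g ω ∂μ) 0 with hneg | hpos
    · rw [max_eq_right hneg, mul_zero, add_zero, ← smul_eq_mul, ← integral_const]
      exact integral_mono (integrable_const _) hW fun ω ↦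
        Real.rpow_le_rpow hu (le_max_left _ _) (by linarith)
    · rw [max_eq_left hpos]
      exact add_le_integral_max_doobMax_rpow hp hu hg0 hg hb hgm h0 hreg
  rw [← huniv, add_mul] at hbound
  linarith

end Martingale

theorem condExp_comap_ae_eq_setAverage {Ω ι : Type*} {m₀ : MeasurableSpace Ω} {μ : Measure Ω}
    [IsFiniteMeasure μ] [MeasurableSpace ι] [Countable ι] [MeasurableSingletonClass ι] {Y : Ω → ι}
    {g : Ω → ℝ} (hY : Measurable Y) (hg : Integrable g μ) :
    μ[g | MeasurableSpace.comap Y inferInstance] =ᵐ[μ] fun ω ↦ ⨍ x in Y ⁻¹' {Y ω}, g x ∂μ := by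
  have hpos : ∀ᵐ ω ∂μ, μ (Y ⁻¹' {Y ω}) ≠ 0 := by
    refine ae_of_ae_map (p := fun i ↦ μ (Y ⁻¹' {i}) ≠ 0) hY.aemeasurable ?_
    rw [ae_iff_of_countable]
    intro i hi
    rwa [Measure.map_apply hY (measurableSet_singleton i)] at hi
  filter_upwards [hpos] with ω hω
  set h := μ[g | MeasurableSpace.comap Y inferInstance]
  have hconst : ∀ x ∈ Y ⁻¹' {Y ω}, h x = h ω := fun x hx ↦
    stronglyMeasurable_condExp.factorsThrough hx
  have hfib : MeasurableSet[MeasurableSpace.comap Y inferInstance] (Y ⁻¹' {Y ω}) :=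
    ⟨{Y ω}, measurableSet_singleton _, rfl⟩
  calc h ω = ⨍ _ in Y ⁻¹' {Y ω}, h ω ∂μ := (setAverage_const hω (measure_ne_top _ _) _).symm
    _ = ⨍ x in Y ⁻¹' {Y ω}, h x ∂μ :=
      (setAverage_congr_fun (hY.comap_le _ hfib) (ae_of_all _ hconst)).symm
    _ = ⨍ x in Y ⁻¹' {Y ω}, g x ∂μ := by
      rw [setAverage_eq, setIntegral_condExp hY.comap_le hg hfib, setAverage_eq]

section Adic

variable {N n k : ℕ} {φ : ℝ → ℝ} {x : ℝ}

/-- Lebesgue measure on the unit interval, as a measure on `ℝ`. -/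
noncomputable abbrev unitVolume : Measure ℝ :=
  volume.restrict (Ico 0 1)

/-- The index `k` of the level-`n` interval `adicItv N n k` that contains a given `x ≥ 0`. -/
noncomputable def adicIndex (N n : ℕ) (x : ℝ) : ℕ :=
  ⌊(N : ℝ) ^ n * x⌋₊

theorem measurable_adicIndex (N n : ℕ) : Measurable (adicIndex N n) :=
  Nat.measurable_floor.comp (measurable_const_mul _)

theorem adicAvg_zero : adicAvg N φ 0 0 = ∫ y in Ico (0 : ℝ) 1, |φ y| := by
  simp [adicAvg, adicItv]

theorem tendsto_adicIndex_div (hN : 1 < N) (hx : 0 ≤ x) :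
    Tendsto (fun n ↦ (adicIndex N n x : ℝ) / (N : ℝ) ^ n) atTop (𝓝 x) := by
  simp only [adicIndex, mul_comm _ x]
  exact (tendsto_nat_floor_mul_div_atTop hx).comp
    (tendsto_pow_atTop_atTop_of_one_lt (by exact_mod_cast hN))

variable [NeZero N]

theorem adicIndex_succ_div (n : ℕ) (x : ℝ) : adicIndex N (n + 1) x / N = adicIndex N n x := by
  have hN : (N : ℝ) ≠ 0 := NeZero.ne _
  rw [adicIndex, ← Nat.floor_div_natCast, pow_succ', mul_assoc, mul_div_cancel_left₀ _ hN,
    adicIndex]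

theorem mem_adicItv_iff (hx : 0 ≤ x) : x ∈ adicItv N n k ↔ adicIndex N n x = k := by
  have hN : (0 : ℝ) < (N : ℝ) ^ n := pow_pos (Nat.cast_pos.2 (NeZero.pos N)) n
  rw [adicIndex, Nat.floor_eq_iff (by positivity), adicItv, mem_Ico, div_le_iff₀' hN,
    lt_div_iff₀' hN]

theorem adicIndex_lt_pow (hx : x ∈ Ico (0 : ℝ) 1) : adicIndex N n x < N ^ n := by
  have hN : (0 : ℝ) < (N : ℝ) ^ n := pow_pos (Nat.cast_pos.2 (NeZero.pos N)) n
  rw [adicIndex, Nat.floor_lt (mul_nonneg hN.le hx.1), Nat.cast_pow]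
  exact mul_lt_of_lt_one_right hN hx.2

theorem adicItv_subset_unit (hk : k < N ^ n) : adicItv N n k ⊆ Ico 0 1 := by
  have hN : (0 : ℝ) < (N : ℝ) ^ n := pow_pos (Nat.cast_pos.2 (NeZero.pos N)) n
  refine Ico_subset_Ico (by positivity) ?_
  rw [div_le_one hN]
  exact_mod_cast hk

theorem adicItv_eq_inter_preimage (hk : k < N ^ n) :
    adicItv N n k = Ico 0 1 ∩ adicIndex N n ⁻¹' {k} := by
  ext y
  constructor
  · intro hy
    have hy1 := adicItv_subset_unit hk hy
    exact ⟨hy1, (mem_adicItv_iff hy1.1).1 hy⟩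
  · rintro ⟨hy1, hyk⟩
    exact (mem_adicItv_iff hy1.1).2 hyk

theorem volume_real_adicItv : volume.real (adicItv N n k) = ((N : ℝ) ^ n)⁻¹ := by
  have hN : (0 : ℝ) < (N : ℝ) ^ n := pow_pos (Nat.cast_pos.2 (NeZero.pos N)) n
  rw [adicItv, Real.volume_real_Ico_of_le (by gcongr; linarith)]
  ring

theorem setAverage_unitVolume_adicIndex (hk : k < N ^ n) :
    ⨍ y in adicIndex N n ⁻¹' {k}, |φ y| ∂unitVolume = adicAvg N φ n k := by
  rw [unitVolume, Measure.restrict_restrict (measurable_adicIndex N n (measurableSet_singleton k)),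
    inter_comm, ← adicItv_eq_inter_preimage hk, setAverage_eq, volume_real_adicItv, inv_inv,
    smul_eq_mul, adicAvg]

/-- The filtration of the unit interval generated by the `N`-adic intervals. -/
noncomputable def adicFiltration (N : ℕ) [NeZero N] : Filtration ℕ Real.measurableSpace where
  seq n := MeasurableSpace.comap (adicIndex N n) ⊤
  mono' := monotone_nat_of_le_succ fun n ↦ by
    have h : adicIndex N n = (· / N) ∘ adicIndex N (n + 1) :=
      funext fun x ↦ (adicIndex_succ_div n x).symm
    rw [h, ← MeasurableSpace.comap_comp]
    exact MeasurableSpace.comap_mono le_top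
  le' n := (measurable_adicIndex N n).comap_le

theorem condExp_adicFiltration_ae_eq (hφ : Integrable φ unitVolume) (n : ℕ) :
    unitVolume[(fun y ↦ |φ y|) | adicFiltration N n] =ᵐ[unitVolume]
      fun x ↦ adicAvg N φ n (adicIndex N n x) := by
  filter_upwards [condExp_comap_ae_eq_setAverage (measurable_adicIndex N n) hφ.abs,
    ae_restrict_mem measurableSet_Ico] with x hx hx1
  exact hx.trans (setAverage_unitVolume_adicIndex (adicIndex_lt_pow hx1))

theorem adicMax_eq_iSup (hx : x ∈ Ico (0 : ℝ) 1) :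
    adicMax N φ x = ⨆ n, adicAvg N φ n (adicIndex N n x) := by
  rw [adicMax, iSup]
  congr 1
  ext r
  constructor
  · rintro ⟨n, k, -, hk, rfl⟩
    exact ⟨n, congrArg _ ((mem_adicItv_iff hx.1).1 hk)⟩
  · rintro ⟨n, rfl⟩
    exact ⟨n, adicIndex N n x, adicIndex_lt_pow hx, (mem_adicItv_iff hx.1).2 rfl, rfl⟩

theorem adicMax_ae_eq_doobMax (hφ : Integrable φ unitVolume) :
    adicMax N φ =ᵐ[unitVolume] doobMax unitVolume (adicFiltration N) fun y ↦ |φ y| := by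
  filter_upwards [ae_all_iff.2 (condExp_adicFiltration_ae_eq (N := N) hφ),
    ae_restrict_mem measurableSet_Ico] with x hx hx1
  rw [adicMax_eq_iSup hx1, doobMax]
  exact iSup_congr fun n ↦ (hx n).symm

theorem adicItv_succ_subset (hk : k < N ^ (n + 1)) : adicItv N (n + 1) k ⊆ adicItv N n (k / N) := by
  intro y hy
  have hy0 := (adicItv_subset_unit hk hy).1
  rw [mem_adicItv_iff hy0, ← adicIndex_succ_div, (mem_adicItv_iff hy0).1 hy]

theorem adicAvg_succ_le (hφ : Integrable φ unitVolume) (hk : k < N ^ (n + 1)) :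
    adicAvg N φ (n + 1) k ≤ N * adicAvg N φ n (k / N) := by
  have hkN : k / N < N ^ n := Nat.div_lt_of_lt_mul (by rwa [← pow_succ'])
  rw [adicAvg, adicAvg, pow_succ', mul_assoc]
  refine mul_le_mul_of_nonneg_left (mul_le_mul_of_nonneg_left ?_ (by positivity)) (by positivity)
  exact setIntegral_mono_set (IntegrableOn.mono_set hφ.abs (adicItv_subset_unit hkN))
    (ae_of_all _ fun _ ↦ abs_nonneg _) (adicItv_succ_subset hk).eventuallyLE

theorem condExp_adicFiltration_zero_ae_eq (hφ : Integrable φ unitVolume) :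
    unitVolume[(fun y ↦ |φ y|) | adicFiltration N 0] =ᵐ[unitVolume]
      fun _ ↦ ∫ y, |φ y| ∂unitVolume := by
  filter_upwards [condExp_adicFiltration_ae_eq (N := N) hφ 0,
    ae_restrict_mem measurableSet_Ico] with x hx hx1
  rw [hx, Nat.lt_one_iff.1 (adicIndex_lt_pow (n := 0) hx1), adicAvg_zero]

theorem condExp_adicFiltration_succ_ae_le (hφ : Integrable φ unitVolume) (n : ℕ) :
    unitVolume[(fun y ↦ |φ y|) | adicFiltration N (n + 1)] ≤ᵐ[unitVolume]
      fun x ↦ N * (unitVolume[(fun y ↦ |φ y|) | adicFiltration N n]) x := by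
  filter_upwards [condExp_adicFiltration_ae_eq (N := N) hφ n,
    condExp_adicFiltration_ae_eq (N := N) hφ (n + 1),
    ae_restrict_mem measurableSet_Ico] with x hn hsucc hx1
  rw [hsucc, hn, ← adicIndex_succ_div n x]
  exact adicAvg_succ_le hφ (adicIndex_lt_pow hx1)

theorem aestronglyMeasurable_iSup_adicFiltration (hN : 1 < N)
    (hφ : AEStronglyMeasurable φ unitVolume) :
    AEStronglyMeasurable[⨆ n, adicFiltration N n] φ unitVolume := by
  have hidx (n : ℕ) :
      Measurable[⨆ n, adicFiltration N n] fun x ↦ (adicIndex N n x : ℝ) / (N : ℝ) ^ n :=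
    ((measurable_from_top (f := fun k : ℕ ↦ (k : ℝ) / (N : ℝ) ^ n)).comp
      (comap_measurable (adicIndex N n))).mono (le_iSup (adicFiltration N) n) le_rfl
  refine ⟨_, (hφ.stronglyMeasurable_mk.measurable.comp (.liminf hidx)).stronglyMeasurable, ?_⟩
  filter_upwards [hφ.ae_eq_mk, ae_restrict_mem measurableSet_Ico] with x hφx hx
  rw [Function.comp_apply, (tendsto_adicIndex_div hN hx.1).liminf_eq, hφx]

theorem restrict_lt_adicMax (hφ : Integrable φ unitVolume) (u : ℝ) :
    volume.restrict {x ∈ Ico (0 : ℝ) 1 | u < adicMax N φ x} =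
      unitVolume.restrict {x | u < doobMax unitVolume (adicFiltration N) (fun y ↦ |φ y|) x} := by
  have hsep : {x ∈ Ico (0 : ℝ) 1 | u < adicMax N φ x} = {x | u < adicMax N φ x} ∩ Ico 0 1 :=
    ext fun _ ↦ and_comm
  rw [hsep, ← Measure.restrict_restrict' measurableSet_Ico]
  refine Measure.restrict_congr_set (eventuallyEq_set.2 ?_)
  filter_upwards [adicMax_ae_eq_doobMax (N := N) hφ] with x hx
  exact iff_of_eq (congrArg (u < ·) hx)

theorem setIntegral_adicMax_rpow (hφ : Integrable φ unitVolume) (u p : ℝ) :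
    ∫ x in {x ∈ Ico (0 : ℝ) 1 | u < adicMax N φ x}, adicMax N φ x ^ p =
      ∫ x in {x | u < doobMax unitVolume (adicFiltration N) (fun y ↦ |φ y|) x},
        doobMax unitVolume (adicFiltration N) (fun y ↦ |φ y|) x ^ p ∂unitVolume := by
  rw [restrict_lt_adicMax hφ]
  exact integral_congr_ae (ae_restrict_of_ae ((adicMax_ae_eq_doobMax hφ).fun_comp (· ^ p)))

theorem volume_lt_adicMax (hφ : Integrable φ unitVolume) (u : ℝ) :
    volume {x ∈ Ico (0 : ℝ) 1 | u < adicMax N φ x} =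
      unitVolume {x | u < doobMax unitVolume (adicFiltration N) (fun y ↦ |φ y|) x} := by
  rw [← Measure.restrict_apply_univ, restrict_lt_adicMax hφ, Measure.restrict_apply_univ]

end Adic

theorem stmt6_general (N : ℕ) (hN : 2 ≤ N) (p f F : ℝ) (hp : 1 < p) (φ : ℝ → ℝ)
    (hφ : MemLp φ (ENNReal.ofReal p) (volume.restrict (Ico 0 1)))
    (hφ1 : ∫ x in Ico (0 : ℝ) 1, |φ x| = f) (hφp : ∫ x in Ico (0 : ℝ) 1, |φ x| ^ p = F)
    (u : ℝ) (hu : f ≤ N * u) :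
    (∫ x in {x ∈ Ico (0 : ℝ) 1 | u < adicMax N φ x}, adicMax N φ x ^ p) ≥
      (volume {x ∈ Ico (0 : ℝ) 1 | u < adicMax N φ x}).toReal * u ^ p +
        (((N : ℝ) ^ p - 1) / ((N : ℝ) ^ p - N)) * max (F - u ^ (p - 1) * f) 0 := by
  have : NeZero N := ⟨by omega⟩
  have hb : (1 : ℝ) < N := by exact_mod_cast hN
  have hφ_int : Integrable φ unitVolume := hφ.integrable (by simpa using hp.le)
  have hu0 : 0 ≤ u := nonneg_of_mul_nonneg_right
    ((integral_nonneg fun x ↦ abs_nonneg (φ x)).trans (hφ1.trans_le hu)) (by linarith)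
  have h0 : unitVolume[(fun y ↦ |φ y|) | adicFiltration N 0] ≤ᵐ[unitVolume] fun _ ↦ N * u := by
    filter_upwards [condExp_adicFiltration_zero_ae_eq (N := N) hφ_int] with x hx
    exact (hx.trans hφ1).trans_le hu
  rw [setIntegral_adicMax_rpow hφ_int, volume_lt_adicMax hφ_int, ← hφ1, ← hφp]
  exact setIntegral_doobMax_rpow_ge hp hu0 hb (ae_of_all _ fun x ↦ abs_nonneg (φ x)) hφ.abs
    (aestronglyMeasurable_iSup_adicFiltration hN hφ.abs.1) h0
    (condExp_adicFiltration_succ_ae_le hφ_int)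

theorem stmt6 (N : ℕ) (hN : 2 ≤ N) (p f F : ℝ) (hp : 1 < p)
    (hf : 0 < f) (hF : 0 < F) (hfF : f ^ p ≤ F)
    (φ : ℝ → ℝ) (hφm : Measurable φ) (hφ0 : ∀ x ∈ Set.Ico (0:ℝ) 1, 0 ≤ φ x)
    (hφ1 : (∫ x in Set.Ico (0:ℝ) 1, φ x) = f)
    (hφp : (∫ x in Set.Ico (0:ℝ) 1, φ x ^ p) = F)
    (u : ℝ) (hu : f ≤ u) :
    (∫ x in {x ∈ Set.Ico (0:ℝ) 1 | u < adicMax N φ x}, adicMax N φ x ^ p) ≥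
      (volume {x ∈ Set.Ico (0:ℝ) 1 | u < adicMax N φ x}).toReal * u ^ p +
        (((N : ℝ) ^ p - 1) / ((N : ℝ) ^ p - N)) * max (F - u ^ (p - 1) * f) 0 := by
  have habs : EqOn (fun x ↦ |φ x|) φ (Ico 0 1) := fun x hx ↦ abs_of_nonneg (hφ0 x hx)
  have hint : Integrable (fun x ↦ φ x ^ p) unitVolume := .of_integral_ne_zero (hφp.trans_ne hF.ne')
  have hmem : MemLp φ (ENNReal.ofReal p) unitVolume :=
    (integrable_rpow_iff_memLp (by linarith) hφm.aestronglyMeasurable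
      ((ae_restrict_mem measurableSet_Ico).mono hφ0)).1 hint
  exact stmt6_general N hN p f F hp φ hmem
    ((setIntegral_congr_fun measurableSet_Ico habs).trans hφ1)
    ((setIntegral_congr_fun measurableSet_Ico (habs.comp_left (g := (· ^ p)))).trans hφp) u
    (hu.trans (le_mul_of_one_le_left (by linarith) (by exact_mod_cast (by omega : 1 ≤ N))))
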